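/- arXiv:1512.05122 — 3 statements merged into one kernel-verified Lean document; each statement's English description precedes it below -/
import Mathlib

section
/- Assume the ordinal α meshes with the ordinal β. For every natural number n and y: if fund(β,n,y) > 0 or fund(α+β,n,y) > α, then α + fund(β,n,y+1) = fund(α+β,n,y+1). -/
/-!
The identity is a statement about one step of the descent: if `α` meshes with `γ` and `γ ≠ 0`,
then `α + {γ}(n) = {α + γ}(n)` (`add_fs`).  Meshing means that the Cantor normal form of `α + γ`
is the juxtaposition of those of `α` and `γ` (with the adjacent coefficients merged when the last
exponent of `α` equals the leading one of `γ`), and `{·}(n)` modifies only the last summand,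
which comes from `γ`.

Since `{γ}(n) ≤ γ`, meshing with `α` and normal forms persist along the descent from `β`, so
`fund (α + β) n y = α + fund β n y` as long as `fund β n y ≠ 0`.  From the first `y` with
`fund β n y = 0` on, `fund (α + β) n y ≤ α`, so each of the two alternative hypotheses excludes
this second phase.
-/

namespace Paper

/-- `pred? o = some β` when the notation `o` denotes a successor ordinal `β + 1`;
`pred? o = none` when `o` denotes `0` or a limit ordinal. -/
def pred? : ONote → Option ONote
  | ONote.zero => none
  | ONote.oadd e m a =>
    match a with
    | ONote.oadd e' m' a' => (pred? (ONote.oadd e' m' a')).map (ONote.oadd e m)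
    | ONote.zero => if e = 0 then some (ONote.ofNat ((m : ℕ) - 1)) else none

/-- The fundamental sequence: `fs α n` is `{α}(n)`.  We have `{0}(n) = 0`,
`{β+1}(n) = β`, `{γ + ω^(δ+1)}(n) = γ + ω^δ·(n+1)` and `{γ + ω^δ}(n) = γ + ω^({δ}(n))`
for `δ` a limit. -/
def fs : ONote → ℕ → ONote
  | ONote.zero, _ => ONote.zero
  | ONote.oadd e m a, n =>
    match a with
    | ONote.oadd e' m' a' => ONote.oadd e m (fs (ONote.oadd e' m' a') n)
    | ONote.zero =>
      match e with
      | ONote.zero => ONote.ofNat ((m : ℕ) - 1)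
      | ONote.oadd e1 m1 a1 =>
        let tail : ONote :=
          match pred? (ONote.oadd e1 m1 a1) with
          | some p => ONote.oadd p ⟨n + 1, n.succ_pos⟩ ONote.zero
          | none => ONote.oadd (fs (ONote.oadd e1 m1 a1) n) 1 ONote.zero
        if (m : ℕ) = 1 then tail
        else ONote.oadd (ONote.oadd e1 m1 a1) ⟨max ((m : ℕ) - 1) 1, by omega⟩ tail

/-- Iteration of the fundamental sequence: `fund α n x` applies `{·}(n)` to `α`, `x` times. -/
def fund (α : ONote) (n : ℕ) : ℕ → ONote
  | 0 => α
  | x + 1 => fs (fund α n x) n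

/-- `StepAt α n x β` expresses `α ↘ₙˣ β`: some `y ≤ x` has `fund α n y = β`. -/
def StepAt (α : ONote) (n x : ℕ) (β : ONote) : Prop :=
  ∃ y ≤ x, fund α n y = β

/-- `Step α n β` expresses `α ↘ₙ β`. -/
def Step (α : ONote) (n : ℕ) (β : ONote) : Prop :=
  ∃ x, StepAt α n x β


/-- The smallest exponent in the Cantor normal form of a notation. -/
def lastExp : ONote → ONote
  | ONote.zero => ONote.zero
  | ONote.oadd e _ ONote.zero => e
  | ONote.oadd _ _ (ONote.oadd e' m' a') => lastExp (ONote.oadd e' m' a')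

/-- `α` meshes with `γ` if `α = 0`, or `γ < ω^(α₀+1)` where `α₀` is the smallest
exponent in the Cantor normal form of `α`. -/
def Meshes (α γ : ONote) : Prop :=
  α = 0 ∨ γ < ONote.oadd (lastExp α + 1) 1 0

open ONote

/-- `{ω^e·m}(n)` for `e ≠ 0`: one copy of `ω^e` is replaced by `ω^q·k`, with `q` and `k`
independent of `m`. -/
theorem fs_oadd_zero {e : ONote} (he0 : e ≠ 0) (n : ℕ)
    (ih : NF (fs e n) ∧ fs e n < e) (hp : ∀ p, pred? e = some p → NF p ∧ p < e) :
    ∃ (q : ONote) (k : ℕ+), NF q ∧ q < e ∧ fs (oadd e 1 0) n = oadd q k 0 ∧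
      ∀ m : ℕ+, fs (oadd e (m + 1) 0) n = oadd e m (oadd q k 0) := by
  rcases e with _ | ⟨e1, m1, a1⟩
  · exact absurd rfl he0
  have hm (m : ℕ+) : (⟨max (((m + 1 : ℕ+) : ℕ) - 1) 1, by omega⟩ : ℕ+) = m := by
    apply PNat.eq
    have := m.pos
    simp
    omega
  rcases h : pred? (oadd e1 m1 a1) with _ | p
  · refine ⟨fs (oadd e1 m1 a1) n, 1, ih.1, ih.2, ?_, fun m => ?_⟩
    · rw [← zero_def, fs]; simp [h]
    · rw [← zero_def, fs]; simp only [h, hm]; simp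
  · refine ⟨p, ⟨n + 1, n.succ_pos⟩, (hp p h).1, (hp p h).2, ?_, fun m => ?_⟩
    · rw [← zero_def, fs]; simp [h]
    · rw [← zero_def, fs]; simp only [h, hm]; simp

theorem fs_oadd_of_ne_zero (e : ONote) (m : ℕ+) {a : ONote} (ha : a ≠ 0) (n : ℕ) :
    fs (oadd e m a) n = oadd e m (fs a n) := by
  rcases a with _ | ⟨e', m', a'⟩
  · exact absurd rfl ha
  · rw [fs]

theorem fs_oadd_zero_zero (m : ℕ+) (n : ℕ) : fs (oadd 0 m 0) n = ofNat ((m : ℕ) - 1) := by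
  rw [← zero_def, fs]

theorem nf_oadd_of_lt {e a b : ONote} {m : ℕ+} (h : NF (oadd e m a)) (hb : NF b) (hlt : b < a) :
    NF (oadd e m b) :=
  NF.oadd h.fst m (hb.below_of_lt' ((lt_def.1 hlt).trans h.snd'.repr_lt))

theorem ofNat_pred_lt (m : ℕ+) : ofNat ((m : ℕ) - 1) < oadd 0 m 0 := by
  have := m.pos
  rw [lt_def, repr_ofNat]
  simp only [ONote.repr, one_mul, Ordinal.opow_zero, add_zero]
  exact_mod_cast (by omega : (m : ℕ) - 1 < m)

/-- The inequality is all that is needed of `o = p + 1`: it keeps `ω^p·(n+1)` below `ω^o`. -/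
theorem pred?_lt : ∀ (o p : ONote), NF o → pred? o = some p → NF p ∧ p < o := by
  intro o
  induction o with
  | zero => intro p _ h; simp [pred?] at h
  | oadd e m a _ iha =>
    intro p ho h
    rcases a with _ | ⟨e', m', a'⟩
    · rw [pred?] at h
      split_ifs at h with he
      subst he
      cases h
      exact ⟨inferInstance, ofNat_pred_lt m⟩
    · rw [pred?, Option.map_eq_some_iff] at h
      obtain ⟨q, hq, rfl⟩ := h
      obtain ⟨h1, h2⟩ := iha q ho.snd hq
      exact ⟨nf_oadd_of_lt ho h1 h2, oadd_lt_oadd_3 h2⟩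

theorem fs_nf_lt (n : ℕ) : ∀ o : ONote, NF o → o ≠ 0 → NF (fs o n) ∧ fs o n < o := by
  intro o
  induction o with
  | zero => intro _ h; exact absurd rfl h
  | oadd e m a ihe iha =>
    intro ho _
    by_cases ha : a = 0
    · subst ha
      by_cases he : e = 0
      · subst he
        rw [fs_oadd_zero_zero]
        exact ⟨inferInstance, ofNat_pred_lt m⟩
      · have hne := ho.fst
        obtain ⟨q, k, hq, hqe, h1, h2⟩ :=
          fs_oadd_zero he n (ihe hne he) (fun p => pred?_lt e p hne)
        have hqk : NF (oadd q k 0) := inferInstance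
        induction m using PNat.recOn with
        | one => rw [h1]; exact ⟨hqk, oadd_lt_oadd_1 hqk hqe⟩
        | succ m _ =>
          have hnf : NF (oadd e m (oadd q k 0)) :=
            NF.oadd hne m (NF.below_of_lt (lt_def.1 hqe) hqk)
          rw [h2]
          exact ⟨hnf, oadd_lt_oadd_2 hnf (by simp)⟩
    · rw [fs_oadd_of_ne_zero e m ha]
      obtain ⟨h1, h2⟩ := iha ho.snd ha
      exact ⟨nf_oadd_of_lt ho h1 h2, oadd_lt_oadd_3 h2⟩

theorem fs_zero (n : ℕ) : fs 0 n = 0 := by rw [← zero_def, fs]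

theorem fs_nf {o : ONote} (ho : NF o) (n : ℕ) : NF (fs o n) := by
  by_cases h : o = 0
  · subst h; rw [fs_zero]; exact ho
  · exact (fs_nf_lt n o ho h).1

theorem fs_le {o : ONote} (ho : NF o) (n : ℕ) : fs o n ≤ o := by
  by_cases h : o = 0
  · subst h; rw [fs_zero]
  · exact (fs_nf_lt n o ho h).2.le

theorem fs_nfBelow {o : ONote} {b : Ordinal} (ho : NFBelow o b) (n : ℕ) : NFBelow (fs o n) b :=
  have hnf : NF o := ⟨⟨b, ho⟩⟩
  (fs_nf hnf n).below_of_lt' ((le_def.1 (fs_le hnf n)).trans_lt ho.repr_lt)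

theorem addAux_of_nfBelow {e o : ONote} (m : ℕ+) (he : NF e) (ho : NFBelow o (ONote.repr e)) :
    addAux e m o = oadd e m o := by
  rcases o with _ | ⟨e', m', a'⟩
  · rfl
  · have : NF e' := ho.fst
    have hlt := ho.lt
    have hc := cmp_compares e e'
    rcases h : ONote.cmp e e' <;> rw [h] at hc <;>
      simp only [Ordering.compares_lt, Ordering.compares_eq, Ordering.compares_gt] at hc
    · exact absurd (lt_def.1 hc) hlt.not_gt
    · exact absurd (hc ▸ hlt) (lt_irrefl _)
    · simp [addAux, h]

theorem onote_cmp_self (e : ONote) [NF e] : ONote.cmp e e = Ordering.eq := by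
  have hc := cmp_compares e e
  rcases h : ONote.cmp e e <;> rw [h] at hc <;> simp_all

theorem addAux_oadd_self (e : ONote) [NF e] (m m' : ℕ+) (a : ONote) :
    addAux e m (oadd e m' a) = oadd e (m + m') a := by
  simp [addAux, onote_cmp_self]

/-- The one-step identity for `α` with a single summand `ω^e·m`. -/
theorem addAux_fs {e γ : ONote} (he : NF e) (m : ℕ+) (hγ : NFBelow γ (ONote.repr e + 1))
    (h0 : γ ≠ 0) (n : ℕ) : addAux e m (fs γ n) = fs (addAux e m γ) n := by
  rcases γ with _ | ⟨e', m', a'⟩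
  · exact absurd rfl h0
  have he' : NF e' := hγ.fst
  have hnf : NF (oadd e' m' a') := ⟨⟨_, hγ⟩⟩
  rcases (Order.lt_add_one_iff.1 hγ.lt).lt_or_eq with hlt | heq
  · have hb : NFBelow (oadd e' m' a') (ONote.repr e) := hnf.below_of_lt hlt
    rw [addAux_of_nfBelow m he hb, addAux_of_nfBelow m he (fs_nfBelow hb n),
      fs_oadd_of_ne_zero e m h0]
  · obtain rfl := repr_inj.1 heq
    rw [addAux_oadd_self]
    by_cases ha : a' = 0
    · subst ha
      by_cases hz : e' = 0
      · subst hz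
        rw [fs_oadd_zero_zero, fs_oadd_zero_zero]
        induction m' using PNat.recOn with
        | one =>
          obtain ⟨k, rfl⟩ : ∃ k, m = Nat.succPNat k := ⟨m.natPred, by simp⟩
          simp [addAux]
        | succ k _ =>
          obtain ⟨j, rfl⟩ : ∃ j, k = Nat.succPNat j := ⟨k.natPred, by simp⟩
          obtain ⟨i, rfl⟩ : ∃ i, m = Nat.succPNat i := ⟨m.natPred, by simp⟩
          have h1 : ((j.succPNat + 1 : ℕ+) : ℕ) - 1 = j.succ := by simp
          have h2 : ((i.succPNat + (j.succPNat + 1) : ℕ+) : ℕ) - 1 = (i + j + 1).succ := by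
            simp; omega
          rw [h1, h2, ofNat_succ, ofNat_succ, addAux_oadd_self]
          congr 1
          apply PNat.eq
          simp; omega
      · obtain ⟨q, k, hq, hqe, h1, h2⟩ :=
          fs_oadd_zero hz n (fs_nf_lt n e' he hz) (fun p => pred?_lt e' p he)
        induction m' using PNat.recOn with
        | one =>
          rw [h1, h2, addAux_of_nfBelow m he (NF.below_of_lt (lt_def.1 hqe) inferInstance)]
        | succ m' _ => rw [h2, ← add_assoc, h2, addAux_oadd_self]
    · rw [fs_oadd_of_ne_zero _ _ ha, fs_oadd_of_ne_zero _ _ ha, addAux_oadd_self]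

theorem add_ne_zero_of_right {a γ : ONote} (ha : NF a) (hγ : NF γ) (h0 : γ ≠ 0) : a + γ ≠ 0 := by
  intro h
  have h1 : ONote.repr (a + γ) = 0 := by rw [h]; rfl
  rw [repr_add] at h1
  have h2 : ONote.repr γ = 0 := by
    have := le_add_self (a := ONote.repr γ) (b := ONote.repr a)
    rw [h1] at this
    simpa using this
  exact h0 (repr_inj.1 (h2.trans repr_zero.symm))

theorem nf_lastExp : ∀ a : ONote, NF a → NF (lastExp a) := by
  intro a
  induction a with
  | zero => intro _; exact NF.zero
  | oadd e m a _ iha =>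
    intro h
    rcases a with _ | ⟨e', m', a'⟩
    · exact h.fst
    · exact iha h.snd

/-- The meshing condition in terms of `NFBelow`. -/
theorem Meshes.nfBelow {e a γ : ONote} {m : ℕ+} (h : Meshes (oadd e m a) γ)
    (ha : NF (oadd e m a)) (hγ : NF γ) :
    NFBelow γ (ONote.repr (lastExp (oadd e m a)) + 1) := by
  have := nf_lastExp _ ha
  rcases h with h | h
  · cases h
  · refine hγ.below_of_lt' ?_
    simpa [lt_def, ONote.repr, repr_add] using h

theorem lastExp_lt : ∀ {a : ONote} {b : Ordinal}, a ≠ 0 → NFBelow a b →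
    ONote.repr (lastExp a) < b := by
  intro a
  induction a with
  | zero => intro _ h; exact absurd rfl h
  | oadd e m a _ iha =>
    intro b _ h
    rcases a with _ | ⟨e', m', a'⟩
    · exact h.lt
    · exact (iha (by rintro ⟨⟩) h.snd).trans h.lt

/-- `{·}(n)` commutes with prepending a meshing `α`: it acts only on the last summand. -/
theorem add_fs (n : ℕ) {γ : ONote} (hγ : NF γ) (h0 : γ ≠ 0) :
    ∀ α : ONote, NF α → Meshes α γ → α + fs γ n = fs (α + γ) n := by
  intro α
  induction α with
  | zero => intro _ _; rw [zero_def, ONote.zero_add, ONote.zero_add]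
  | oadd e m a _ iha =>
    intro hα hm
    have hb := hm.nfBelow hα hγ
    rw [oadd_add, oadd_add]
    rcases a with _ | ⟨e', m', a'⟩
    · rw [zero_def, ONote.zero_add, ONote.zero_add]
      exact addAux_fs hα.fst m hb h0 n
    · have hne : oadd e' m' a' ≠ 0 := by rintro ⟨⟩
      have hm' : Meshes (oadd e' m' a') γ := by
        rcases hm with hm | hm
        · cases hm
        · exact Or.inr hm
      have hγe : NFBelow γ (ONote.repr e) :=
        hb.mono (Order.add_one_le_of_lt (lastExp_lt hne hα.snd'))
      rw [addAux_of_nfBelow m hα.fst (add_nfBelow hα.snd' (fs_nfBelow hγe n)),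
        addAux_of_nfBelow m hα.fst (add_nfBelow hα.snd' hγe), iha hα.snd hm',
        fs_oadd_of_ne_zero e m (add_ne_zero_of_right hα.snd hγ h0)]

theorem fund_nf {β : ONote} (hβ : NF β) (n y : ℕ) : NF (fund β n y) := by
  induction y with
  | zero => exact hβ
  | succ y ih => exact fs_nf ih n

theorem fund_le {β : ONote} (hβ : NF β) (n y : ℕ) : fund β n y ≤ β := by
  induction y with
  | zero => exact le_rfl
  | succ y ih => exact (fs_le (fund_nf hβ n y) n).trans ih

theorem Meshes.mono {α β γ : ONote} (h : Meshes α β) (hle : γ ≤ β) : Meshes α γ :=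
  h.imp id hle.trans_lt

theorem add_zero' {α : ONote} (hα : NF α) : α + 0 = α :=
  repr_inj.1 (by rw [repr_add, repr_zero, add_zero])

/-- The two phases of the descent from `α + β`: parallel to that from `β`, and at most `α` once
the latter has reached `0`. -/
theorem fund_add_phases {α β : ONote} (hα : NF α) (hβ : NF β) (hm : Meshes α β) (n y : ℕ) :
    (fund β n y ≠ 0 ∧ fund (α + β) n y = α + fund β n y) ∨
      (fund β n y = 0 ∧ fund (α + β) n y ≤ α) := by
  have hle (y : ℕ) (h : fund (α + β) n y = α + fund β n y) :
      (fund β n y ≠ 0 ∧ fund (α + β) n y = α + fund β n y) ∨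
        (fund β n y = 0 ∧ fund (α + β) n y ≤ α) := by
    by_cases h0 : fund β n y = 0
    · exact Or.inr ⟨h0, by rw [h, h0, add_zero' hα]⟩
    · exact Or.inl ⟨h0, h⟩
  induction y with
  | zero => exact hle 0 rfl
  | succ y ih =>
    rcases ih with ⟨h0, h⟩ | ⟨h0, h⟩
    · refine hle (y + 1) ?_
      rw [fund, fund, h, add_fs n (fund_nf hβ n y) h0 α hα (hm.mono (fund_le hβ n y))]
    · refine Or.inr ⟨by rw [fund, h0, fs_zero], ?_⟩
      exact (fs_le (fund_nf inferInstance n y) n).trans h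

/-- If `α` meshes with `β` and `fund(β,n,y) > 0` or `fund(α+β,n,y) > α`,
then `α + fund(β,n,y+1) = fund(α+β,n,y+1)`. -/
theorem fund_add (α β : ONote) (hα : α.NF) (hβ : β.NF) (hm : Meshes α β)
    (n y : ℕ) (h : 0 < fund β n y ∨ α < fund (α + β) n y) :
    α + fund β n (y + 1) = fund (α + β) n (y + 1) := by
  rcases fund_add_phases hα hβ hm n y with ⟨h0, heq⟩ | ⟨h0, hle⟩
  · rw [fund, fund, heq, add_fs n (fund_nf hβ n y) h0 α hα (hm.mono (fund_le hβ n y))]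
  · rcases h with h | h
    · exact absurd h (by rw [h0]; exact lt_irrefl _)
    · exact absurd h hle.not_gt

end Paper
end

section
/- For every ordinal α < ε₀ and every natural number n we have α ↘ₙ^Num(α,n) 0, i.e. the iteration of the fundamental sequence at base n starting from α reaches 0 within Num(α,n) steps. -/
/-!
Every application of the fundamental sequence at base `n` to a nonzero `α` strictly decreases the
natural number `num α n` (`num_fs_lt`), so `0` is reached after at most `num α n` steps.

The decrease is checked along the recursion for `fs`. If the last exponent is a successor `p + 1`,
its `num` is `num p n + 1` (`num_pred?`), and the last summand drops from `(n+2)^(num p n + 1)` to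
`(n+2)^(num p n) * (n+1)`. If it is a limit, the decrease for the exponent carries over, because
powers of `n + 2` are strictly monotone.
-/

namespace Paper

/-- `num α n` replaces every occurrence of `ω` in the hereditary Cantor normal
form of `α` by the number `n + 2`. -/
def num : ONote → ℕ → ℕ
  | ONote.zero, _ => 0
  | ONote.oadd e m a, n => (n + 2) ^ num e n * (m : ℕ) + num a n

theorem num_zero (n : ℕ) : num ONote.zero n = 0 := rfl

theorem num_oadd (e : ONote) (m : ℕ+) (a : ONote) (n : ℕ) :
    num (ONote.oadd e m a) n = (n + 2) ^ num e n * (m : ℕ) + num a n := rfl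

theorem num_ofNat (k n : ℕ) : num (ONote.ofNat k) n = k := by
  cases k with
  | zero => rfl
  | succ k => simp [ONote.ofNat, num]

theorem num_pred? (n : ℕ) (α p : ONote) (h : pred? α = some p) : num α n = num p n + 1 := by
  induction α generalizing p with
  | zero => simp [pred?] at h
  | oadd e m a _ iha =>
    cases a with
    | zero =>
      rw [pred?] at h
      split_ifs at h with he
      subst he
      obtain rfl := Option.some.inj h
      have := m.pos
      rw [num_ofNat, num_oadd, num_zero, show num 0 n = 0 from rfl]
      simp only [pow_zero, one_mul]
      omega
    | oadd e' m' a' =>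
      rw [pred?] at h
      obtain ⟨q, hq, rfl⟩ := Option.map_eq_some_iff.1 h
      rw [num_oadd e m, num_oadd e m, iha q hq, Nat.add_assoc]

theorem num_fs_lt (n : ℕ) (α : ONote) (h : α ≠ ONote.zero) : num (fs α n) n < num α n := by
  induction α with
  | zero => exact absurd rfl h
  | oadd e m a ihe iha =>
    have hm := m.pos
    cases a with
    | oadd e' m' a' =>
      have := iha (by simp)
      rw [fs, num_oadd, num_oadd]
      omega
    | zero =>
      cases e with
      | zero =>
        rw [fs, num_ofNat, num_oadd, num_zero]
        simp only [pow_zero, one_mul]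
        omega
      | oadd e1 m1 a1 =>
        have ihe := ihe (by simp)
        rw [fs]
        generalize htail : (match pred? (ONote.oadd e1 m1 a1) with
          | some p => ONote.oadd p ⟨n + 1, n.succ_pos⟩ ONote.zero
          | none => ONote.oadd (fs (ONote.oadd e1 m1 a1) n) 1 ONote.zero) = tail
        have key : num tail n < (n + 2) ^ num (ONote.oadd e1 m1 a1) n := by
          subst htail
          split
          · next p hp =>
            rw [num_pred? n _ p hp, pow_succ]
            change (n + 2) ^ num p n * (n + 1) + 0 < _
            exact Nat.mul_lt_mul_of_pos_left (Nat.lt_succ_self _) (by positivity)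
          · rw [num_oadd, num_zero, PNat.one_coe, Nat.mul_one, Nat.add_zero]
            exact Nat.pow_lt_pow_right (by omega) ihe
        generalize ONote.oadd e1 m1 a1 = e at *
        split_ifs with h1
        · rw [num_oadd, h1, num_zero]
          omega
        · change (n + 2) ^ num e n * max ((m : ℕ) - 1) 1 + num tail n <
            (n + 2) ^ num e n * (m : ℕ) + 0
          obtain ⟨k, hk⟩ : ∃ k, (m : ℕ) = k + 2 := ⟨m - 2, by omega⟩
          rw [hk, show max (k + 2 - 1) 1 = k + 1 by omega, show k + 2 = k + 1 + 1 from rfl,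
            Nat.mul_succ _ (k + 1)]
          omega

theorem fund_succ' (α : ONote) (n x : ℕ) : fund α n (x + 1) = fund (fs α n) n x := by
  induction x with
  | zero => rfl
  | succ x ih => rw [fund, ih, fund]

/-- For every `α < ε₀` and every `n` we have `α ↘ₙ^Num(α,n) 0`. -/
theorem stepAt_num_to_zero (α : ONote) (hα : α.NF) (n : ℕ) :
    StepAt α n (num α n) 0 := by
  clear hα
  induction hk : num α n using Nat.strong_induction_on generalizing α with
  | _ k ih =>
    by_cases h : α = ONote.zero
    · exact ⟨0, Nat.zero_le _, h⟩
    · have hlt := num_fs_lt n α h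
      obtain ⟨y, hy, hy0⟩ := ih _ (hk ▸ hlt) (fs α n) rfl
      exact ⟨y + 1, by omega, by rw [fund_succ', hy0]⟩

end Paper
end

section
/- Let α, β < ω² and k be a natural number. If β ↘ₖ α+1, then 3^β ↘_(3^(k+1)) 3^α·2+1 and 3^β ↘_(3^(k+1)) 3^α+1. If β ↘ₖ α+2, then 3^β ↘_(3^(k+1)) 3^α+2. -/
/-! Both sides of the claim can be made explicit.  The `k`-descent from `ω·p + q` only visits
ordinals `ω·a + b` with either `a = p` and `b ≤ q`, or `a < p` and `b ≤ k + 1`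
(`fund_wpq`).  So `β ↘ₖ α + i` forces either `p' = p` and `q' + i ≤ q`, or `p' < p` and
`q' + i ≤ k + 1` (`hyp_cases`).

With `n = 3^(k+1)`, the descent from `ω^p·m` passes through `ω^p·m'` for all `1 ≤ m' ≤ m`, and
through `ω^r·(n+1)` for every `r < p` (`step_W`, `step_W_of_lt`).  Hence in both cases `3^β`
reaches `ω^p'·m` for some `m ≥ 3^(q'+i)`; replacing one copy of `ω^p'` by its descent to a small
positive number then gives `3^α·2 + 1`, `3^α + 1` or `3^α + 2`, since `2·3^q' + 1 ≤ 3^(q'+1)` and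
`3^q' + 2 ≤ 3^(q'+2)`. -/

namespace Paper

/-- The ordinal `ω·p + q` below `ω²`. -/
def wpq (p q : ℕ) : ONote := ONote.omega * ONote.ofNat p + ONote.ofNat q

/-- Base-3 exponentiation for ordinals below `ω²`: `3^(ω·p+q) = ω^p · 3^q`. -/
def exp3 (p q : ℕ) : ONote := ONote.oadd (ONote.ofNat p) ⟨3 ^ q, by positivity⟩ 0

/-! ### The descent relation -/

theorem fund_add_s15 (a : ONote) (n x y : ℕ) : fund a n (x + y) = fund (fund a n x) n y := by
  induction y with
  | zero => rfl
  | succ y ih => rw [← Nat.add_assoc]; simp only [fund, ih]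

theorem step_iff {a b : ONote} {n : ℕ} : Step a n b ↔ ∃ x, fund a n x = b :=
  ⟨fun ⟨_, y, _, h⟩ => ⟨y, h⟩, fun ⟨y, h⟩ => ⟨y, y, le_rfl, h⟩⟩

theorem Step.rfl' {a : ONote} {n : ℕ} : Step a n a := step_iff.2 ⟨0, rfl⟩

theorem Step.of_eq {a b : ONote} {n : ℕ} (h : fs a n = b) : Step a n b := step_iff.2 ⟨1, h⟩

theorem Step.trans' {a b c : ONote} {n : ℕ} (h : Step a n b) (h' : Step b n c) : Step a n c := by
  obtain ⟨x, hx⟩ := step_iff.1 h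
  obtain ⟨y, hy⟩ := step_iff.1 h'
  exact step_iff.2 ⟨x + y, by rw [fund_add_s15, hx, hy]⟩

theorem fs_oadd {e : ONote} {m : ℕ+} {r : ONote} {n : ℕ} (hr : r ≠ 0) :
    fs (ONote.oadd e m r) n = ONote.oadd e m (fs r n) := by
  cases r with
  | zero => exact absurd rfl hr
  | oadd e' m' a' => rw [fs]

/-- Descents may be carried out in the tail of a Cantor normal form as long as the tail does not
vanish. -/
theorem Step.tail {r s : ONote} {n : ℕ} (e : ONote) (m : ℕ+) (h : Step r n s) (hs : s ≠ 0) :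
    Step (ONote.oadd e m r) n (ONote.oadd e m s) := by
  obtain ⟨x, hx⟩ := step_iff.1 h
  refine step_iff.2 ⟨x, ?_⟩
  clear h
  induction x generalizing s with
  | zero => rw [← hx]; rfl
  | succ x ih =>
    have h0 : fund r n x ≠ 0 := by
      intro h0
      apply hs
      rw [← hx, fund, h0]
      rfl
    rw [fund, ih h0 rfl, fs_oadd h0, ← hx, fund]

/-! ### Multiples of powers of `ω` -/

/-- The ordinal `ω^p·(m+1)`; the shift by one makes the coefficient positive. -/
def W (p m : ℕ) : ONote := ONote.oadd (ONote.ofNat p) m.succPNat 0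

theorem fs_W_zero (p n : ℕ) : fs (W (p + 1) 0) n = W p n := rfl

theorem fs_W_succ (p m n : ℕ) :
    fs (W (p + 1) (m + 1)) n = ONote.oadd (ONote.ofNat (p + 1)) m.succPNat (W p n) := by
  have h : ((m + 1).succPNat : ℕ) ≠ 1 := by simp
  have h' : (⟨max (((m + 1).succPNat : ℕ) - 1) 1, by omega⟩ : ℕ+) = m.succPNat :=
    PNat.eq (by change max (((m + 1).succPNat : ℕ) - 1) 1 = m + 1; simp)
  refine (if_neg (t := W p n) h).trans ?_
  rw [h']
  rfl

/-! ### Descents below `ω²` -/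

theorem wpq_zero (q : ℕ) : wpq 0 q = ONote.ofNat q := by
  cases q <;> rfl

theorem wpq_succ (p q : ℕ) : wpq (p + 1) q = ONote.oadd 1 p.succPNat (ONote.ofNat q) := by
  have h : ONote.omega * ONote.ofNat (p + 1) = ONote.oadd 1 p.succPNat 0 := by
    change ONote.oadd 1 (1 * p.succPNat) 0 = _
    rw [one_mul]
  rw [wpq, h]
  cases q <;> rfl

theorem ofNat_injective {a b : ℕ} (h : ONote.ofNat a = ONote.ofNat b) : a = b := by
  simpa using congrArg ONote.repr h

theorem wpq_injective {a b c d : ℕ} (h : wpq a b = wpq c d) : a = c ∧ b = d := by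
  rcases a with _ | a <;> rcases c with _ | c <;>
    simp only [wpq_zero, wpq_succ] at h
  · exact ⟨rfl, ofNat_injective h⟩
  · rcases b with _ | b
    · cases h
    · exact absurd (ONote.oadd.inj h).1 (by decide)
  · rcases d with _ | d
    · cases h
    · exact absurd (ONote.oadd.inj h).1 (by decide)
  · obtain ⟨-, h1, h2⟩ := ONote.oadd.inj h
    exact ⟨congrArg (fun m : ℕ+ => (m : ℕ)) h1, ofNat_injective h2⟩

theorem ofNat_add (a b : ℕ) : ONote.ofNat a + ONote.ofNat b = ONote.ofNat (a + b) := by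
  cases a with
  | zero => rw [Nat.zero_add]; rfl
  | succ a =>
    cases b with
    | zero => rfl
    | succ b =>
      change ONote.oadd 0 (a.succPNat + b.succPNat) 0 = ONote.oadd 0 (a + 1 + b).succPNat 0
      congr 1

theorem wpq_add (p q i : ℕ) : wpq p q + ONote.ofNat i = wpq p (q + i) := by
  cases p with
  | zero => rw [wpq_zero, wpq_zero, ofNat_add]
  | succ p =>
    rw [wpq_succ, wpq_succ, ONote.oadd_add, ofNat_add]
    cases q + i <;> rfl

theorem fs_ofNat_succ (m n : ℕ) : fs (ONote.ofNat (m + 1)) n = ONote.ofNat m := rfl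

theorem fs_wpq_succ (p q k : ℕ) : fs (wpq p (q + 1)) k = wpq p q := by
  cases p with
  | zero => simp only [wpq_zero, fs_ofNat_succ]
  | succ p =>
    rw [wpq_succ, wpq_succ, fs_oadd (by intro h; cases h), fs_ofNat_succ]

theorem fs_wpq_zero (p k : ℕ) : fs (wpq (p + 1) 0) k = wpq p (k + 1) := by
  cases p with
  | zero => rfl
  | succ p => 
    rw [wpq_succ, wpq_succ]
    simp only [ONote.ofNat_zero]
    exact fs_W_succ 0 p k

/-- The ordinals visited by the `k`-descent from `ω·p + q`. -/
theorem fund_wpq (p q k x : ℕ) :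
    ∃ a b, fund (wpq p q) k x = wpq a b ∧ (a = p ∧ b ≤ q ∨ a < p ∧ b ≤ k + 1) := by
  induction x with
  | zero => exact ⟨p, q, rfl, by simp⟩
  | succ x ih =>
    obtain ⟨a, b, h, hab⟩ := ih
    simp only [fund, h]
    rcases b with _ | b
    · rcases a with _ | a
      · exact ⟨0, 0, rfl, hab⟩
      · exact ⟨a, k + 1, fs_wpq_zero a k, by omega⟩
    · exact ⟨a, b, fs_wpq_succ a b k, by omega⟩

theorem hyp_cases {p q p' q' k i : ℕ} (h : Step (wpq p q) k (wpq p' q' + ONote.ofNat i)) :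
    p' = p ∧ q' + i ≤ q ∨ p' < p ∧ q' + i ≤ k + 1 := by
  obtain ⟨x, hx⟩ := step_iff.1 h
  obtain ⟨a, b, hab, hc⟩ := fund_wpq p q k x
  rw [hab, wpq_add] at hx
  obtain ⟨rfl, rfl⟩ := wpq_injective hx
  exact hc

/-! ### Descents below `ω^ω` -/

/-- The coefficient of `ω^p` can be decreased to any positive value, and the descent from
`ω^p·(n+1)` passes through every `j + 1 ≤ n + 1`.  The two facts are proved together: lowering
the coefficient of `ω^(p+1)` by one means emptying a tail `ω^p·(n+1)`, which goes through `1`. -/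
theorem step_W_aux (n p : ℕ) :
    (∀ m m', m' ≤ m → Step (W p m) n (W p m')) ∧
      ∀ j, j ≤ n → Step (W p n) n (ONote.ofNat (j + 1)) := by
  induction p with
  | zero =>
    have h : ∀ m m', m' ≤ m → Step (W 0 m) n (W 0 m') := by
      intro m m' hm
      induction m, hm using Nat.le_induction with
      | base => exact Step.rfl'
      | succ m hm ih => exact (Step.of_eq (fs_ofNat_succ (m + 1) n)).trans' ih
    exact ⟨h, fun j hj => h n j hj⟩
  | succ p ih =>
    have h : ∀ m m', m' ≤ m → Step (W (p + 1) m) n (W (p + 1) m') := by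
      intro m m' hm
      induction m, hm using Nat.le_induction with
      | base => exact Step.rfl'
      | succ m hm ih' =>
        refine (Step.of_eq (fs_W_succ p m n)).trans' (Step.trans' ?_ ih')
        refine ((ih.2 0 (Nat.zero_le _)).tail _ _ (by intro h; cases h)).trans' ?_
        exact Step.of_eq rfl
    exact ⟨h, fun j hj => (h n 0 (Nat.zero_le _)).trans'
      ((Step.of_eq (fs_W_zero p n)).trans' (ih.2 j hj))⟩

theorem step_W {n p m m' : ℕ} (h : m' ≤ m) : Step (W p m) n (W p m') :=
  (step_W_aux n p).1 m m' h

theorem step_W_of_lt {n p p' : ℕ} (h : p' < p) (m : ℕ) : Step (W p m) n (W p' n) := by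
  induction p, h using Nat.le_induction generalizing m with
  | base => exact (step_W (Nat.zero_le m)).trans' (Step.of_eq (fs_W_zero p' n))
  | succ p _ ih =>
    exact (step_W (Nat.zero_le m)).trans' ((Step.of_eq (fs_W_zero p n)).trans' (ih n))

theorem W_zero_add (c j : ℕ) : W 0 c + ONote.ofNat (j + 1) = W 0 (c + j + 1) := by
  change ONote.ofNat (c + 1) + ONote.ofNat (j + 1) = ONote.ofNat (c + j + 1 + 1)
  rw [ofNat_add]
  congr 1
  omega

theorem W_succ_add (p c j : ℕ) : W (p + 1) c + ONote.ofNat (j + 1) =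
    ONote.oadd (ONote.ofNat (p + 1)) c.succPNat (ONote.ofNat (j + 1)) := rfl

/-- For `p > 0` the bound `c < m` would suffice; the stronger one is what `p = 0` requires. -/
theorem step_W_add {n p m c j : ℕ} (hj : j ≤ n) (h : c + j + 1 ≤ m) :
    Step (W p m) n (W p c + ONote.ofNat (j + 1)) := by
  cases p with
  | zero => rw [W_zero_add]; exact step_W h
  | succ p =>
    rw [W_succ_add]
    refine (step_W (m' := c + 1) (by omega)).trans' ((Step.of_eq (fs_W_succ p c n)).trans' ?_)
    exact ((step_W_aux n p).2 j hj).tail _ _ (by intro h; cases h)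

theorem exp3_eq {p q c : ℕ} (h : 3 ^ q = c + 1) : exp3 p q = W p c := by
  unfold exp3 W
  congr 1
  exact PNat.eq h

theorem exp3_mul_two {p q c : ℕ} (h : 3 ^ q * 2 = c + 1) :
    exp3 p q * ONote.ofNat 2 = W p c := by
  have : (Mul.mul (⟨3 ^ q, by positivity⟩ : ℕ+) (Nat.succPNat 1) : ℕ+) = c.succPNat := PNat.eq h
  unfold exp3 W
  rw [← this]
  rfl

/-- The common form of the three claims: `3^β` reaches `ω^p'·(c+1) + (j+1)` as soon as the
coefficients add up to at most `3^(q'+i)`, where `β ↘ₖ α + i`. -/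
theorem step_exp3_aux {p q p' q' k i c j : ℕ}
    (h : Step (wpq p q) k (wpq p' q' + ONote.ofNat i)) (hj : j ≤ 3 ^ (k + 1))
    (hc : c + j + 2 ≤ 3 ^ (q' + i)) :
    Step (exp3 p q) (3 ^ (k + 1)) (W p' c + ONote.ofNat (j + 1)) := by
  obtain ⟨m, hm⟩ : ∃ m, 3 ^ q = m + 1 := Nat.exists_eq_add_one.2 (by positivity)
  rw [exp3_eq hm]
  rcases hyp_cases h with ⟨rfl, hq⟩ | ⟨hp, hq⟩
  · have := Nat.pow_le_pow_right (n := 3) (by norm_num) hq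
    exact step_W_add hj (by omega)
  · have := Nat.pow_le_pow_right (n := 3) (by norm_num) hq
    exact (step_W_of_lt hp m).trans' (step_W_add hj (by omega))

/-- For `α = ω·p'+q'` and `β = ω·p+q` below `ω²`: if `β ↘ₖ α+1` then
`3^β ↘_(3^(k+1)) 3^α·2+1` and `3^β ↘_(3^(k+1)) 3^α+1`; if `β ↘ₖ α+2` then
`3^β ↘_(3^(k+1)) 3^α+2`. -/
theorem step_exp3 (p q p' q' k : ℕ) :
    (Step (wpq p q) k (wpq p' q' + 1) →
      Step (exp3 p q) (3 ^ (k + 1)) (exp3 p' q' * ONote.ofNat 2 + 1) ∧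
        Step (exp3 p q) (3 ^ (k + 1)) (exp3 p' q' + 1)) ∧
    (Step (wpq p q) k (wpq p' q' + 2) →
      Step (exp3 p q) (3 ^ (k + 1)) (exp3 p' q' + 2)) := by
  obtain ⟨c, hc⟩ : ∃ c, 3 ^ q' = c + 1 := Nat.exists_eq_add_one.2 (by positivity)
  have hk : 1 ≤ 3 ^ (k + 1) := Nat.one_le_pow _ _ (by norm_num)
  refine ⟨fun h => ⟨?_, ?_⟩, fun h => ?_⟩
  · rw [exp3_mul_two (c := 2 * c + 1) (by omega)]
    exact step_exp3_aux (i := 1) (j := 0) h (Nat.zero_le _) (by rw [pow_succ]; omega)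
  · rw [exp3_eq hc]
    exact step_exp3_aux (i := 1) (j := 0) h (Nat.zero_le _) (by rw [pow_succ]; omega)
  · rw [exp3_eq hc]
    exact step_exp3_aux (i := 2) (j := 1) h hk (by rw [pow_succ, pow_succ]; omega)

end Paper
end
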